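/- Fix constants g > 0 and N₀ > 0. For any α ∈ ℝ and any β ≥ 0, the function (p, B) ↦ α·p − β·B·log₂(1 + p·g/(N₀·B)) is convex on the open positive quadrant {(p,B) ∈ ℝ × ℝ : p > 0 and B > 0}. -/

import Mathlib

/-- The perspective `(x, t) ↦ t * f (t⁻¹ • x)` of a concave function is jointly concave. -/
theorem ConcaveOn.perspective {E : Type*} [AddCommGroup E] [Module ℝ E] {s : Set E} {f : E → ℝ}
    (hf : ConcaveOn ℝ s f) :
    ConcaveOn ℝ {x : E × ℝ | 0 < x.2 ∧ x.2⁻¹ • x.1 ∈ s}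
      (fun x : E × ℝ => x.2 * f (x.2⁻¹ • x.1)) := by
  have pos : ∀ {t u a b : ℝ}, 0 < t → 0 < u → 0 ≤ a → 0 ≤ b → a + b = 1 →
      0 < a * t + b * u := fun ht hu ha hb hab =>
    (convex_Ioi (0 : ℝ)) ht hu ha hb hab
  have weights : ∀ {t u a b : ℝ}, 0 < a * t + b * u →
      a * t / (a * t + b * u) + b * u / (a * t + b * u) = 1 := fun h => by
    rw [← add_div, div_self h.ne']
  have combo : ∀ {x y : E} {t u a b : ℝ}, 0 < t → 0 < u →
      (a * t + b * u)⁻¹ • (a • x + b • y) =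
        (a * t / (a * t + b * u)) • t⁻¹ • x + (b * u / (a * t + b * u)) • u⁻¹ • y := by
    intro x y t u a b ht hu
    simp only [smul_add, smul_smul]
    congr 2 <;> field_simp
  refine ⟨?_, ?_⟩
  · rintro ⟨x, t⟩ ⟨ht, hx⟩ ⟨y, u⟩ ⟨hu, hy⟩ a b ha hb hab
    dsimp only at ht hx hu hy
    have hT := pos ht hu ha hb hab
    refine ⟨hT, ?_⟩
    change (a * t + b * u)⁻¹ • (a • x + b • y) ∈ s
    rw [combo ht hu]
    exact hf.1 hx hy (by positivity) (by positivity) (weights hT)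
  · rintro ⟨x, t⟩ ⟨ht, hx⟩ ⟨y, u⟩ ⟨hu, hy⟩ a b ha hb hab
    dsimp only at ht hx hu hy
    have hT := pos ht hu ha hb hab
    change a * (t * f (t⁻¹ • x)) + b * (u * f (u⁻¹ • y)) ≤
      (a * t + b * u) * f ((a * t + b * u)⁻¹ • (a • x + b • y))
    rw [combo ht hu]
    have h := mul_le_mul_of_nonneg_left
      (hf.2 hx hy (by positivity) (by positivity) (weights hT)) hT.le
    refine le_of_eq_of_le ?_ h
    simp only [smul_eq_mul]
    field_simp

theorem concaveOn_logb_two_one_add_mul {c : ℝ} (hc : 0 < c) :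
    ConcaveOn ℝ (Set.Ioi 0) (fun t : ℝ => Real.logb 2 (1 + t * c)) := by
  refine ⟨convex_Ioi 0, fun x (hx : 0 < x) y (hy : 0 < y) a b ha hb hab => ?_⟩
  have h := strictConcaveOn_log_Ioi.concaveOn.2
    (show 1 + x * c ∈ Set.Ioi (0 : ℝ) from by simp only [Set.mem_Ioi]; positivity)
    (show 1 + y * c ∈ Set.Ioi (0 : ℝ) from by simp only [Set.mem_Ioi]; positivity) ha hb hab
  have e : a * (1 + x * c) + b * (1 + y * c) = 1 + (a * x + b * y) * c := by
    linear_combination hab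
  simp only [smul_eq_mul, Real.logb] at h ⊢
  rw [e] at h
  rw [← mul_div_assoc, ← mul_div_assoc, ← add_div]
  exact div_le_div_of_nonneg_right h (Real.log_nonneg one_le_two)


/-- the per-device term of the objective of P₇,
`(p,B) ↦ α·p − β·B·log₂(1 + p·g/(N₀·B))`, is convex on the open positive
quadrant. -/
theorem parametric_objective_convexOn (g N₀ α β : ℝ)
    (hg : 0 < g) (hN₀ : 0 < N₀) (hβ : 0 ≤ β) :
    ConvexOn ℝ {x : ℝ × ℝ | 0 < x.1 ∧ 0 < x.2}
      (fun x : ℝ × ℝ =>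
        α * x.1 - β * (x.2 * Real.logb 2 (1 + x.1 * g / (N₀ * x.2)))) := by
  have hconc := (concaveOn_logb_two_one_add_mul (div_pos hg hN₀)).perspective
  have hset : {x : ℝ × ℝ | 0 < x.2 ∧ x.2⁻¹ • x.1 ∈ Set.Ioi (0 : ℝ)} =
      {x : ℝ × ℝ | 0 < x.1 ∧ 0 < x.2} := by
    ext x
    simp only [Set.mem_ofPred_eq, Set.mem_Ioi, smul_eq_mul]
    rw [and_comm]
    exact and_congr_left fun h => mul_pos_iff_of_pos_left (inv_pos.2 h)
  rw [hset] at hconc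
  have hlin := (α • LinearMap.fst ℝ ℝ ℝ).convexOn hconc.1
  refine (hlin.sub (hconc.smul hβ)).congr fun x hx => ?_
  have hrate : x.2⁻¹ * x.1 * (g / N₀) = x.1 * g / (N₀ * x.2) := by
    have := hx.2.ne'
    field_simp
  simp [hrate]
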